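/- arXiv:1012.1103 — 3 statements merged into one kernel-verified Lean document; each statement's English description precedes it below -/
import Mathlib

section
/- Let (X,T) be a topological dynamical system and Z ⊆ X. For any s ≥ 0 and ε, δ > 0, whenever N ∈ ℕ is large enough (e.g. N ≥ 2 with n² e^{−nδ} ≤ 1 for all n ≥ N), one has M^{s+δ}_{N,6ε}(Z) ≤ W^s_{N,ε}(Z) ≤ M^s_{N,ε}(Z). Consequently M^{s+δ}(Z) ≤ W^s(Z) ≤ M^s(Z), and the weighted Bowen topological entropy equals Bowen's topological entropy: h^{WB}_top(T,Z) = h^B_top(T,Z). -/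
/-!
Unit weights turn a cover into a weighted cover, which gives `W ≤ M`.

Conversely, let a weighted family dominate `χ_Z`, and let `C_m` be the total weight of its balls of
order `m`. If `∑_{m ≥ N} e^{-δm} < 1`, then each point of `Z` receives weight at least `e^{-δm}`
from the balls of some single order `m`. Balls of radius `2ε` about a maximal `2ε`-separated set of
points receiving that much in order `m` cover all such points. A ball of radius `ε` contains at most
one point of that set, so by double counting it has at most `e^{δm} C_m` points, and covering by the
`2ε`-balls with exponent `s + δ` costs at most `∑_m e^{δm} C_m e^{-(s+δ)m} = ∑_m C_m e^{-sm}`.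

The entropies agree because `M^s(Z) = ∞` forces `W^t(Z) = ∞` for every `t < s`.
-/

open Filter Set MeasureTheory Topology
open scoped ENNReal NNReal

section Core

variable {X : Type*} [MetricSpace X]

/-- The open Bowen ball `B_n(x, ε)` = `{y : d_n(x,y) < ε}` where
`d_n(x,y) = max_{0 ≤ k ≤ n-1} d(T^k x, T^k y)` is the `n`-th Bowen metric. -/
def bowenBall (T : X → X) (x : X) (n : ℕ) (ε : ℝ) : Set X :=
  {y | ∀ k < n, dist (T^[k] x) (T^[k] y) < ε}

/-- The closed Bowen ball `B̄_n(x, ε)` = `{y : d_n(x,y) ≤ ε}`. -/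
def bowenClosedBall (T : X → X) (x : X) (n : ℕ) (ε : ℝ) : Set X :=
  {y | ∀ k < n, dist (T^[k] x) (T^[k] y) ≤ ε}

/-- `M^s_{N,ε}(Z)`: infimum of `Σ_i exp (- s n_i)` over finite or countable families
of open Bowen balls `{B_{n_i}(x_i, ε)}` with `n_i ≥ N` covering `Z`. -/
noncomputable def Mpre (T : X → X) (s : ℝ) (N : ℕ) (ε : ℝ) (Z : Set X) : ℝ≥0∞ :=
  ⨅ (I : Set ℕ) (x : ℕ → X) (n : ℕ → ℕ) (_ : ∀ i ∈ I, N ≤ n i)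
    (_ : Z ⊆ ⋃ i ∈ I, bowenBall T (x i) (n i) ε),
    ∑' i : I, ENNReal.ofReal (Real.exp (-s * n i))

/-- `M^s_ε(Z) = lim_{N → ∞} M^s_{N,ε}(Z)` (the quantity is nondecreasing in `N`). -/
noncomputable def MpreEps (T : X → X) (s : ℝ) (ε : ℝ) (Z : Set X) : ℝ≥0∞ :=
  ⨆ N : ℕ, Mpre T s N ε Z

/-- `M^s(Z) = lim_{ε → 0} M^s_ε(Z)` (the quantity is nondecreasing as `ε` decreases). -/
noncomputable def Mtop (T : X → X) (s : ℝ) (Z : Set X) : ℝ≥0∞ :=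
  ⨆ (ε : ℝ) (_ : 0 < ε), MpreEps T s ε Z

/-- Bowen's topological entropy `h^B_top(T,Z)`: the critical value of `s` at which
`M^s(Z)` jumps from `∞` to `0`. -/
noncomputable def bowenEntropy (T : X → X) (Z : Set X) : ℝ≥0∞ :=
  ⨆ (s : ℝ) (_ : Mtop T s Z = ∞), ENNReal.ofReal s

/-- `P^s_{N,ε}(Z)`: suprema of `Σ_i exp (- s n_i)` over finite or countable pairwise
disjoint families of closed Bowen balls `{B̄_{n_i}(x_i, ε)}` with `x_i ∈ Z`, `n_i ≥ N`. -/
noncomputable def Ppre (T : X → X) (s : ℝ) (N : ℕ) (ε : ℝ) (Z : Set X) : ℝ≥0∞ :=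
  ⨆ (I : Set ℕ) (x : ℕ → X) (n : ℕ → ℕ) (_ : ∀ i ∈ I, x i ∈ Z ∧ N ≤ n i)
    (_ : ∀ i ∈ I, ∀ j ∈ I, i ≠ j →
      Disjoint (bowenClosedBall T (x i) (n i) ε) (bowenClosedBall T (x j) (n j) ε)),
    ∑' i : I, ENNReal.ofReal (Real.exp (-s * n i))

/-- `P^s_ε(Z) = lim_{N → ∞} P^s_{N,ε}(Z)` (the quantity is nonincreasing in `N`). -/
noncomputable def PpreEps (T : X → X) (s : ℝ) (ε : ℝ) (Z : Set X) : ℝ≥0∞ :=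
  ⨅ N : ℕ, Ppre T s N ε Z

/-- `𝒫^s_ε(Z) = inf { Σ_{i} P^s_ε(Z_i) : ⋃_i Z_i ⊇ Z }`. -/
noncomputable def Pouter (T : X → X) (s : ℝ) (ε : ℝ) (Z : Set X) : ℝ≥0∞ :=
  ⨅ (Zs : ℕ → Set X) (_ : Z ⊆ ⋃ i, Zs i), ∑' i, PpreEps T s ε (Zs i)

/-- `h^P_top(T,Z,ε)`: the critical value of `s` at which `𝒫^s_ε(Z)` jumps from `∞` to `0`. -/
noncomputable def packEntropyEps (T : X → X) (ε : ℝ) (Z : Set X) : ℝ≥0∞ :=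
  ⨆ (s : ℝ) (_ : Pouter T s ε Z = ∞), ENNReal.ofReal s

/-- The packing topological entropy `h^P_top(T,Z) = lim_{ε → 0} h^P_top(T,Z,ε)`
(the quantity is nondecreasing as `ε` decreases). -/
noncomputable def packEntropy (T : X → X) (Z : Set X) : ℝ≥0∞ :=
  ⨆ (ε : ℝ) (_ : 0 < ε), packEntropyEps T ε Z

/-- `r_n(Z,ε)`: the largest cardinality of an `(n,ε)`-separated subset of `Z`,
i.e. a set in which distinct points `x, y` satisfy `d_n(x,y) > ε`. -/
noncomputable def maxSep (T : X → X) (Z : Set X) (n : ℕ) (ε : ℝ) : ℝ≥0∞ :=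
  ⨆ (E : Finset X) (_ : ↑E ⊆ Z ∧
    ∀ x ∈ E, ∀ y ∈ E, x ≠ y → ∃ k < n, ε < dist (T^[k] x) (T^[k] y)),
    (E.card : ℝ≥0∞)

/-- Logarithm on `ℝ≥0∞` (with `elog ∞ = ∞`), used for counting quantities. -/
noncomputable def elog (x : ℝ≥0∞) : ℝ≥0∞ :=
  if x = ∞ then ∞ else ENNReal.ofReal (Real.log x.toReal)

/-- The upper capacity topological entropy
`h^{UC}_top(T,Z) = lim_{ε → 0} limsup_{n → ∞} (1/n) log r_n(Z,ε)`. -/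
noncomputable def upcapEntropy (T : X → X) (Z : Set X) : ℝ≥0∞ :=
  ⨆ (ε : ℝ) (_ : 0 < ε), Filter.limsup (fun n : ℕ => elog (maxSep T Z n ε) / n) Filter.atTop

/-- `- log x` as a function `ℝ≥0∞ → ℝ≥0∞` (with `negLog 0 = ∞`), used for measures of balls. -/
noncomputable def negLog (x : ℝ≥0∞) : ℝ≥0∞ :=
  if x = 0 then ∞ else ENNReal.ofReal (-Real.log x.toReal)

variable [MeasurableSpace X]

/-- The lower local entropy `h̲_μ(T,x) = lim_{ε→0} liminf_{n→∞} -(1/n) log μ(B_n(x,ε))`. -/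
noncomputable def lowerLocalEntropy (T : X → X) (μ : Measure X) (x : X) : ℝ≥0∞ :=
  ⨆ (ε : ℝ) (_ : 0 < ε),
    Filter.liminf (fun n : ℕ => negLog (μ (bowenBall T x n ε)) / n) Filter.atTop

/-- The upper local entropy `h̄_μ(T,x) = lim_{ε→0} limsup_{n→∞} -(1/n) log μ(B_n(x,ε))`. -/
noncomputable def upperLocalEntropy (T : X → X) (μ : Measure X) (x : X) : ℝ≥0∞ :=
  ⨆ (ε : ℝ) (_ : 0 < ε),
    Filter.limsup (fun n : ℕ => negLog (μ (bowenBall T x n ε)) / n) Filter.atTop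

/-- The measure-theoretical lower entropy `h̲_μ(T) = ∫ h̲_μ(T,x) dμ(x)`. -/
noncomputable def lowerEntropy (T : X → X) (μ : Measure X) : ℝ≥0∞ :=
  ∫⁻ x, lowerLocalEntropy T μ x ∂μ

/-- The measure-theoretical upper entropy `h̄_μ(T) = ∫ h̄_μ(T,x) dμ(x)`. -/
noncomputable def upperEntropy (T : X → X) (μ : Measure X) : ℝ≥0∞ :=
  ∫⁻ x, upperLocalEntropy T μ x ∂μ

end Core

section Weighted

variable {X : Type*} [MetricSpace X]

/-- `W^s_{N,ε}(f)`: infimum of `Σ_i c_i exp (- s n_i)` over finite or countable families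
`{(B_{n_i}(x_i, ε), c_i)}` with `0 < c_i < ∞`, `n_i ≥ N` and `Σ_i c_i χ_{B_{n_i}(x_i,ε)} ≥ f`. -/
noncomputable def Wpre (T : X → X) (s : ℝ) (N : ℕ) (ε : ℝ) (f : X → ℝ≥0∞) : ℝ≥0∞ :=
  ⨅ (I : Set ℕ) (x : ℕ → X) (n : ℕ → ℕ) (c : ℕ → ℝ≥0∞)
    (_ : ∀ i ∈ I, 0 < c i ∧ c i < ∞ ∧ N ≤ n i)
    (_ : ∀ y : X, f y ≤ ∑' i : I, (bowenBall T (x i) (n i) ε).indicator (fun _ => c i) y),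
    ∑' i : I, c i * ENNReal.ofReal (Real.exp (-s * n i))

/-- `W^s_{N,ε}(Z) = W^s_{N,ε}(χ_Z)`. -/
noncomputable def WpreSet (T : X → X) (s : ℝ) (N : ℕ) (ε : ℝ) (Z : Set X) : ℝ≥0∞ :=
  Wpre T s N ε (Z.indicator 1)

/-- `W^s_ε(Z) = lim_{N → ∞} W^s_{N,ε}(Z)` (nondecreasing in `N`). -/
noncomputable def WpreEps (T : X → X) (s ε : ℝ) (Z : Set X) : ℝ≥0∞ :=
  ⨆ N : ℕ, WpreSet T s N ε Z

/-- `W^s(Z) = lim_{ε → 0} W^s_ε(Z)` (nondecreasing as `ε` decreases). -/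
noncomputable def Wtop (T : X → X) (s : ℝ) (Z : Set X) : ℝ≥0∞ :=
  ⨆ (ε : ℝ) (_ : 0 < ε), WpreEps T s ε Z

/-- The weighted Bowen topological entropy `h^{WB}_top(T,Z)`: the critical value of `s`
at which `W^s(Z)` jumps from `∞` to `0`. -/
noncomputable def weightedBowenEntropy (T : X → X) (Z : Set X) : ℝ≥0∞ :=
  ⨆ (s : ℝ) (_ : Wtop T s Z = ∞), ENNReal.ofReal s

end Weighted

section WeightedSeparation

variable {X ι : Type*}

lemma exists_subset_isSeparated_isCover (U : SetRel X X) [U.IsRefl] [U.IsSymm] (s : Set X) :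
    ∃ F ⊆ s, U.IsSeparated F ∧ U.IsCover s F := by
  obtain ⟨F, hF⟩ := zorn_subset {F : Set X | F ⊆ s ∧ U.IsSeparated F} fun C hC hchain =>
    ⟨⋃₀ C, ⟨sUnion_subset fun F hF => (hC hF).1,
      (pairwise_sUnion hchain.directedOn).2 fun F hF => (hC hF).2⟩, fun _ => subset_sUnion_of_mem⟩
  exact ⟨F, hF.prop.1, hF.prop.2, .of_maximal_isSeparated hF⟩

lemma tsum_indicator_const_le_of_inter_subsingleton {F B : Set X} (h : (F ∩ B).Subsingleton)
    (c : ℝ≥0∞) : ∑' y : F, B.indicator (fun _ => c) y ≤ c := by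
  calc ∑' y : F, B.indicator (fun _ => c) y
      = ∑' _ : ↥(F ∩ B), c := by
        rw [tsum_subtype F, indicator_indicator, tsum_subtype (F ∩ B) fun _ => c]
    _ = (F ∩ B).encard * c := ENNReal.tsum_set_const _ c
    _ ≤ 1 * c := by
        gcongr
        exact_mod_cast encard_le_one_iff_subsingleton.2 h
    _ = c := one_mul c

lemma encard_mul_le_tsum_of_isSeparated {U : SetRel X X} {F : Set X} (hF : U.IsSeparated F)
    {B : ι → Set X} (hB : ∀ i, ∀ y ∈ B i, ∀ z ∈ B i, (y, z) ∈ U) {c : ι → ℝ≥0∞}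
    {τ : ℝ≥0∞} (hτ : ∀ y ∈ F, τ ≤ ∑' i, (B i).indicator (fun _ => c i) y) :
    F.encard * τ ≤ ∑' i, c i := by
  have hsub (i : ι) : (F ∩ B i).Subsingleton := fun y hy z hz =>
    hF.eq hy.1 hz.1 (not_not.2 (hB i y hy.2 z hz.2))
  calc F.encard * τ
      = ∑' _ : F, τ := (ENNReal.tsum_set_const F τ).symm
    _ ≤ ∑' y : F, ∑' i, (B i).indicator (fun _ => c i) y :=
        ENNReal.tsum_le_tsum fun y => hτ y y.2
    _ = ∑' i, ∑' y : F, (B i).indicator (fun _ => c i) y := ENNReal.tsum_comm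
    _ ≤ ∑' i, c i :=
        ENNReal.tsum_le_tsum fun i => tsum_indicator_const_le_of_inter_subsingleton (hsub i) (c i)

lemma exists_isCover_encard_mul_le_tsum {U : SetRel X X} [U.IsRefl] [U.IsSymm]
    {B : ι → Set X} (hB : ∀ i, ∀ y ∈ B i, ∀ z ∈ B i, (y, z) ∈ U) (c : ι → ℝ≥0∞)
    (τ : ℝ≥0∞) :
    ∃ F : Set X, U.IsCover {y | τ ≤ ∑' i, (B i).indicator (fun _ => c i) y} F ∧
      F.encard * τ ≤ ∑' i, c i := by
  obtain ⟨F, hFτ, hsep, hcover⟩ := exists_subset_isSeparated_isCover U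
    {y | τ ≤ ∑' i, (B i).indicator (fun _ => c i) y}
  exact ⟨F, hcover, encard_mul_le_tsum_of_isSeparated hsep hB hFτ⟩

end WeightedSeparation

section ExponentialTails

lemma tendsto_tsum_Ici_atTop_zero {f : ℕ → ℝ≥0∞} (hf : ∑' n, f n ≠ ∞) :
    Tendsto (fun N : ℕ => ∑' n : Ici N, f n) atTop (𝓝 0) := by
  refine ((ENNReal.tendsto_tsum_compl_atTop_zero hf).comp tendsto_finset_range).congr fun N => ?_
  exact (Equiv.subtypeEquivRight fun n => by simp).tsum_eq fun n : Ici N => f n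

lemma eventually_tsum_Ici_exp_neg_mul_lt_one {δ : ℝ} (hδ : 0 < δ) :
    ∀ᶠ N : ℕ in atTop, ∑' n : Ici N, ENNReal.ofReal (Real.exp (-δ * (n : ℕ))) < 1 := by
  have hsum : Summable fun n : ℕ => Real.exp (-δ * n) := by
    simpa only [mul_comm] using Real.summable_exp_nat_mul_iff.2 (neg_lt_zero.2 hδ)
  exact (tendsto_tsum_Ici_atTop_zero (f := fun n => ENNReal.ofReal (Real.exp (-δ * n)))
    hsum.tsum_ofReal_ne_top).eventually_lt_const one_pos

lemma sum_range_add_tsum_Ici (f : ℕ → ℝ≥0∞) (N : ℕ) :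
    ∑ n ∈ Finset.range N, f n + ∑' n : Ici N, f n = ∑' n, f n := by
  rw [← Finset.tsum_subtype', Finset.coe_range, ← compl_Iio]
  exact ENNReal.summable.tsum_add_tsum_compl ENNReal.summable

lemma tsum_Ici_two_one_div_sq_lt_one :
    ∑' n : Ici (2 : ℕ), ENNReal.ofReal (1 / ((n : ℕ) : ℝ) ^ 2) < 1 := by
  have hsplit : 1 + ∑' n : Ici (2 : ℕ), ENNReal.ofReal (1 / ((n : ℕ) : ℝ) ^ 2) =
      ENNReal.ofReal (Real.pi ^ 2 / 6) := by
    have h := sum_range_add_tsum_Ici (fun n : ℕ => ENNReal.ofReal (1 / (n : ℝ) ^ 2)) 2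
    rw [← ENNReal.ofReal_tsum_of_nonneg (fun n => by positivity) hasSum_zeta_two.summable,
      hasSum_zeta_two.tsum_eq] at h
    simpa [Finset.sum_range_succ] using h
  have hpi : ENNReal.ofReal (Real.pi ^ 2 / 6) < 1 + 1 := by
    rw [one_add_one_eq_two, ← ENNReal.ofReal_ofNat, ENNReal.ofReal_lt_ofReal_iff two_pos]
    nlinarith [Real.pi_lt_d2, Real.pi_pos]
  exact (ENNReal.add_lt_add_iff_left ENNReal.one_ne_top).1 (hsplit.trans_lt hpi)

lemma tsum_Ici_exp_neg_mul_lt_one {N : ℕ} {δ : ℝ} (hN : 2 ≤ N)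
    (hδ : ∀ n : ℕ, N ≤ n → (n : ℝ) ^ 2 * Real.exp (-(n : ℝ) * δ) ≤ 1) :
    ∑' n : Ici N, ENNReal.ofReal (Real.exp (-δ * (n : ℕ))) < 1 := by
  have hterm (n : Ici N) : Real.exp (-δ * (n : ℕ)) ≤ 1 / ((n : ℕ) : ℝ) ^ 2 := by
    have hn : (0 : ℝ) < (n : ℕ) := by exact_mod_cast two_pos.trans_le (hN.trans n.2)
    rw [le_div_iff₀ (by positivity), mul_comm]
    simpa only [neg_mul, mul_comm δ] using hδ n n.2
  calc ∑' n : Ici N, ENNReal.ofReal (Real.exp (-δ * (n : ℕ)))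
      ≤ ∑' n : Ici N, ENNReal.ofReal (1 / ((n : ℕ) : ℝ) ^ 2) :=
        ENNReal.tsum_le_tsum fun n => ENNReal.ofReal_le_ofReal (hterm n)
    _ ≤ ∑' n : Ici (2 : ℕ), ENNReal.ofReal (1 / ((n : ℕ) : ℝ) ^ 2) :=
        ENNReal.tsum_mono_subtype (fun n : ℕ => ENNReal.ofReal (1 / (n : ℝ) ^ 2))
          (Ici_subset_Ici.2 hN)
    _ < 1 := tsum_Ici_two_one_div_sq_lt_one

end ExponentialTails

section BowenBalls

variable {X : Type*} [MetricSpace X] {T : X → X}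

/-- The relation `d_n(x, y) < ε`, where `d_n` is the `n`-th Bowen metric: the dynamical entourage
of the `ε`-entourage of the metric. Its balls are the Bowen balls of order `n`. -/
def bowenEntourage (T : X → X) (n : ℕ) (ε : ℝ) : SetRel X X :=
  Dynamics.dynEntourage T {p | dist p.1 p.2 < ε} n

lemma mem_bowenEntourage {n : ℕ} {ε : ℝ} {x y : X} :
    (x, y) ∈ bowenEntourage T n ε ↔ y ∈ bowenBall T x n ε :=
  Dynamics.mem_dynEntourage

lemma isRefl_bowenEntourage (T : X → X) (n : ℕ) {ε : ℝ} (hε : 0 < ε) :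
    (bowenEntourage T n ε).IsRefl :=
  ⟨fun x => mem_bowenEntourage.2 fun k _ => by rwa [dist_self]⟩

instance isSymm_bowenEntourage (T : X → X) (n : ℕ) (ε : ℝ) : (bowenEntourage T n ε).IsSymm :=
  ⟨fun _ _ h => mem_bowenEntourage.2 fun k hk => by
    simpa only [dist_comm] using mem_bowenEntourage.1 h k hk⟩

lemma mem_bowenEntourage_of_mem_bowenBall {n : ℕ} {ε : ℝ} {x y z : X}
    (hy : y ∈ bowenBall T x n ε) (hz : z ∈ bowenBall T x n ε) :
    (y, z) ∈ bowenEntourage T n (2 * ε) :=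
  mem_bowenEntourage.2 fun k hk => by
    linarith [hy k hk, hz k hk, dist_triangle_left (T^[k] y) (T^[k] z) (T^[k] x)]

lemma bowenBall_mono (T : X → X) (x : X) (n : ℕ) {ε ε' : ℝ} (h : ε ≤ ε') :
    bowenBall T x n ε ⊆ bowenBall T x n ε' :=
  fun _ hy k hk => (hy k hk).trans_le h

end BowenBalls

section Comparison

variable {X ι : Type*} [MetricSpace X]

lemma Mpre_mono_order (T : X → X) (s : ℝ) {N N' : ℕ} (h : N ≤ N') (ε : ℝ) (Z : Set X) :
    Mpre T s N ε Z ≤ Mpre T s N' ε Z :=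
  iInf₂_mono fun _ _ => iInf_mono fun _ => le_iInf fun hn =>
    iInf_le_of_le (fun i hi => h.trans (hn i hi)) le_rfl

lemma Mpre_anti_radius (T : X → X) (s : ℝ) (N : ℕ) {ε ε' : ℝ} (h : ε ≤ ε') (Z : Set X) :
    Mpre T s N ε' Z ≤ Mpre T s N ε Z :=
  iInf₂_mono fun _ x => iInf₂_mono fun n _ => le_iInf fun hZ =>
    iInf_le_of_le (hZ.trans (iUnion₂_mono fun i _ => bowenBall_mono T (x i) (n i) h)) le_rfl

lemma Mpre_le_tsum [Nonempty X] (T : X → X) (s : ℝ) {N : ℕ} {ε : ℝ} {Z : Set X} (x : ι → X)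
    (n : ι → Ici N) (hZ : Z ⊆ ⋃ i, bowenBall T (x i) (n i) ε) :
    Mpre T s N ε Z ≤ ∑' i, ENNReal.ofReal (Real.exp (-s * (n i : ℕ))) := by
  by_cases hfin : ∑' i, ENNReal.ofReal (Real.exp (-s * (n i : ℕ))) = ∞
  · exact le_top.trans_eq hfin.symm
  -- A family of finite cost is countable, since every ball has positive cost.
  have : Countable ι := by
    have hsupp := Summable.countable_support_ennreal hfin
    rwa [Function.support_eq_univ fun i => (ENNReal.ofReal_pos.2 (Real.exp_pos _)).ne',
      countable_univ_iff] at hsupp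
  obtain ⟨e, he⟩ := exists_injective_nat ι
  let x' := Function.extend e x fun _ => Classical.arbitrary X
  let n' := Function.extend e (fun i => (n i : ℕ)) 0
  have hx' (i : ι) : x' (e i) = x i := he.extend_apply _ _ i
  have hn' (i : ι) : n' (e i) = n i := he.extend_apply _ _ i
  refine iInf₂_le_of_le (range e) x' (iInf₂_le_of_le n' ?_ (iInf_le_of_le ?_ ?_))
  · rintro _ ⟨i, rfl⟩
    exact (n i).2.trans_eq (hn' i).symm
  · simpa only [biUnion_range, hx', hn'] using hZ
  · rw [← (Equiv.ofInjective e he).tsum_eq]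
    simp only [Equiv.ofInjective_apply, hn', le_rfl]

lemma WpreSet_le_Mpre (T : X → X) (s : ℝ) (N : ℕ) (ε : ℝ) (Z : Set X) :
    WpreSet T s N ε Z ≤ Mpre T s N ε Z := by
  refine iInf₂_mono fun I x => iInf_mono fun n => le_iInf₂ fun hn hZ =>
    iInf₂_le_of_le (fun _ => 1) (fun i hi => ⟨one_pos, ENNReal.one_lt_top, hn i hi⟩)
      (iInf_le_of_le (indicator_le fun y hy => ?_) ?_)
  · obtain ⟨i, hi, hyi⟩ := mem_iUnion₂.1 (hZ hy)
    refine le_trans ?_ (ENNReal.le_tsum (⟨i, hi⟩ : I))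
    simp only [indicator_of_mem hyi, Pi.one_apply, le_rfl]
  · simp only [one_mul, le_rfl]

lemma ofReal_exp_neg_add_mul (s δ t : ℝ) :
    ENNReal.ofReal (Real.exp (-(s + δ) * t)) =
      ENNReal.ofReal (Real.exp (-δ * t)) * ENNReal.ofReal (Real.exp (-s * t)) := by
  rw [← ENNReal.ofReal_mul (Real.exp_nonneg _), ← Real.exp_add]
  ring_nf

/-- The total weight that a point `y` receives from the Bowen balls of order `m` in the family of
balls of centres `x i`, orders `n i ≥ N` and weights `c i`. -/
noncomputable def orderWeight (T : X → X) {N : ℕ} (ε : ℝ) (x : ι → X) (n : ι → Ici N)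
    (c : ι → ℝ≥0∞) (m : Ici N) (y : X) : ℝ≥0∞ :=
  ∑' i : n ⁻¹' {m}, (bowenBall T (x i) (n i) ε).indicator (fun _ => c i) y

lemma exists_le_orderWeight (T : X → X) {N : ℕ} {ε : ℝ} (x : ι → X) (n : ι → Ici N)
    (c : ι → ℝ≥0∞) {τ : Ici N → ℝ≥0∞} (hτ : ∑' m, τ m < 1) {y : X}
    (hy : 1 ≤ ∑' i, (bowenBall T (x i) (n i) ε).indicator (fun _ => c i) y) :
    ∃ m, τ m ≤ orderWeight T ε x n c m y := by
  by_contra! hlt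
  rw [← ENNReal.tsum_fiberwise _ n] at hy
  exact (hy.trans (ENNReal.tsum_le_tsum fun m => (hlt m).le)).not_gt hτ

lemma exists_isCover_orderWeight (T : X → X) {N : ℕ} {ε : ℝ} (hε : 0 < ε) (x : ι → X)
    (n : ι → Ici N) (c : ι → ℝ≥0∞) (m : Ici N) (τ : ℝ≥0∞) :
    ∃ F : Set X, (bowenEntourage T m (2 * ε)).IsCover {y | τ ≤ orderWeight T ε x n c m y} F ∧
      F.encard * τ ≤ ∑' i : n ⁻¹' {m}, c i := by
  have := isRefl_bowenEntourage T m (mul_pos two_pos hε)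
  refine exists_isCover_encard_mul_le_tsum (ι := n ⁻¹' {m}) (U := bowenEntourage T m (2 * ε))
    (fun i y hy z hz => ?_) (fun i => c i) τ
  rw [show n i = m from i.2] at hy hz
  exact mem_bowenEntourage_of_mem_bowenBall hy hz

lemma Mpre_add_le_tsum [Nonempty X] (T : X → X) (s : ℝ) {δ ε : ℝ} (hε : 0 < ε) {N : ℕ}
    (hδ : ∑' m : Ici N, ENNReal.ofReal (Real.exp (-δ * (m : ℕ))) < 1) {Z : Set X}
    (x : ι → X) (n : ι → Ici N) (c : ι → ℝ≥0∞)
    (hZ : ∀ y ∈ Z, 1 ≤ ∑' i, (bowenBall T (x i) (n i) ε).indicator (fun _ => c i) y) :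
    Mpre T (s + δ) N (2 * ε) Z ≤ ∑' i, c i * ENNReal.ofReal (Real.exp (-s * (n i : ℕ))) := by
  choose F hcover hcard using fun m : Ici N =>
    exists_isCover_orderWeight T hε x n c m (ENNReal.ofReal (Real.exp (-δ * (m : ℕ))))
  have hZF : Z ⊆ ⋃ p : Σ m, F m, bowenBall T p.2 p.1 (2 * ε) := fun y hy => by
    obtain ⟨m, hm⟩ := exists_le_orderWeight T x n c hδ (hZ y hy)
    obtain ⟨z, hz, hyz⟩ := hcover m hm
    exact mem_iUnion.2 ⟨⟨m, z, hz⟩, mem_bowenEntourage.1 (SetRel.symm _ hyz)⟩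
  calc Mpre T (s + δ) N (2 * ε) Z
      ≤ ∑' p : Σ m, F m, ENNReal.ofReal (Real.exp (-(s + δ) * (p.1 : ℕ))) :=
        Mpre_le_tsum T (s + δ) (fun p : Σ m, F m => (p.2 : X)) Sigma.fst hZF
    _ = ∑' m : Ici N, (F m).encard * ENNReal.ofReal (Real.exp (-(s + δ) * (m : ℕ))) := by
        simp only [ENNReal.tsum_sigma', ENNReal.tsum_set_const]
    _ ≤ ∑' m : Ici N, (∑' i : n ⁻¹' {m}, c i) * ENNReal.ofReal (Real.exp (-s * (m : ℕ))) := by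
        simp only [ofReal_exp_neg_add_mul, ← mul_assoc]
        gcongr with m
        exact hcard m
    _ = ∑' m : Ici N, ∑' i : n ⁻¹' {m}, c i * ENNReal.ofReal (Real.exp (-s * (n i : ℕ))) := by
        simp only [← ENNReal.tsum_mul_right]
        exact tsum_congr fun m => tsum_congr fun i => by rw [show n i = m from i.2]
    _ = ∑' i, c i * ENNReal.ofReal (Real.exp (-s * (n i : ℕ))) :=
        ENNReal.tsum_fiberwise (fun i => c i * ENNReal.ofReal (Real.exp (-s * (n i : ℕ)))) n

lemma Mpre_add_le_WpreSet (T : X → X) (s : ℝ) {δ ε : ℝ} (hε : 0 < ε) {N : ℕ}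
    (hδ : ∑' m : Ici N, ENNReal.ofReal (Real.exp (-δ * (m : ℕ))) < 1) (Z : Set X) :
    Mpre T (s + δ) N (2 * ε) Z ≤ WpreSet T s N ε Z := by
  refine le_iInf₂ fun I x => le_iInf₂ fun n c => le_iInf₂ fun hn hZ => ?_
  have : Nonempty X := ⟨x 0⟩
  refine Mpre_add_le_tsum T s hε hδ (fun i : I => x i) (fun i => ⟨n i, (hn i i.2).2.2⟩)
    (fun i => c i) fun y hy => ?_
  simpa only [indicator_of_mem hy, Pi.one_apply] using hZ y

end Comparison

section Entropy

variable {X : Type*} [MetricSpace X]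

lemma Mtop_add_le_Wtop (T : X → X) (s : ℝ) {δ : ℝ} (hδ : 0 < δ) (Z : Set X) :
    Mtop T (s + δ) Z ≤ Wtop T s Z := by
  refine iSup₂_le fun ε hε => iSup_le fun N => ?_
  obtain ⟨N', htail, hN'⟩ :=
    ((eventually_tsum_Ici_exp_neg_mul_lt_one hδ).and (eventually_ge_atTop N)).exists
  calc Mpre T (s + δ) N ε Z
      ≤ Mpre T (s + δ) N' ε Z := Mpre_mono_order T (s + δ) hN' ε Z
    _ = Mpre T (s + δ) N' (2 * (ε / 2)) Z := by rw [mul_div_cancel₀ ε two_ne_zero]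
    _ ≤ WpreSet T s N' (ε / 2) Z := Mpre_add_le_WpreSet T s (half_pos hε) htail Z
    _ ≤ WpreEps T s (ε / 2) Z := le_iSup (fun N => WpreSet T s N (ε / 2) Z) N'
    _ ≤ Wtop T s Z := le_iSup₂ (f := fun ε (_ : 0 < ε) => WpreEps T s ε Z) (ε / 2) (half_pos hε)

lemma Wtop_le_Mtop (T : X → X) (s : ℝ) (Z : Set X) : Wtop T s Z ≤ Mtop T s Z :=
  iSup₂_mono fun ε _ => iSup_mono fun N => WpreSet_le_Mpre T s N ε Z

lemma iSup_ofReal_le_iSup_ofReal_of_add_le {f g : ℝ → ℝ≥0∞}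
    (h : ∀ s δ, 0 < δ → f (s + δ) ≤ g s) :
    ⨆ (s : ℝ) (_ : f s = ∞), ENNReal.ofReal s ≤ ⨆ (s : ℝ) (_ : g s = ∞), ENNReal.ofReal s := by
  refine iSup₂_le fun s hs => le_of_forall_lt_imp_le_of_dense fun a ha => ?_
  have hgap : 0 < s - a.toReal := sub_pos.2 ((ENNReal.lt_ofReal_iff_toReal_lt ha.ne_top).1 ha)
  have hg : g a.toReal = ∞ := by
    simpa only [add_sub_cancel, hs, top_le_iff] using h a.toReal (s - a.toReal) hgap
  exact (ENNReal.ofReal_toReal ha.ne_top).ge.trans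
    (le_iSup₂ (f := fun (s : ℝ) (_ : g s = ∞) => ENNReal.ofReal s) a.toReal hg)

lemma weightedBowenEntropy_eq_bowenEntropy (T : X → X) (Z : Set X) :
    weightedBowenEntropy T Z = bowenEntropy T Z := by
  apply le_antisymm
  · exact iSup_mono fun s => iSup_mono' fun h => ⟨top_unique (h ▸ Wtop_le_Mtop T s Z), le_rfl⟩
  · exact iSup_ofReal_le_iSup_ofReal_of_add_le fun s _ hδ => Mtop_add_le_Wtop T s hδ Z

end Entropy

theorem Mpre_le_Wpre_le_Mpre_and_weightedBowenEntropy_eq_general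
    {X : Type*} [MetricSpace X] (T : X → X) (Z : Set X)
    (s ε δ : ℝ) (hε : 0 < ε) (hδ : 0 < δ) :
    (∀ N : ℕ, ∑' n : Ici N, ENNReal.ofReal (Real.exp (-δ * (n : ℕ))) < 1 →
      Mpre T (s + δ) N (2 * ε) Z ≤ WpreSet T s N ε Z) ∧
    (∀ N : ℕ, WpreSet T s N ε Z ≤ Mpre T s N ε Z) ∧
    Mtop T (s + δ) Z ≤ Wtop T s Z ∧ Wtop T s Z ≤ Mtop T s Z ∧
    weightedBowenEntropy T Z = bowenEntropy T Z :=
  ⟨fun _ htail => Mpre_add_le_WpreSet T s hε htail Z, fun N => WpreSet_le_Mpre T s N ε Z,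
    Mtop_add_le_Wtop T s hδ Z, Wtop_le_Mtop T s Z, weightedBowenEntropy_eq_bowenEntropy T Z⟩

/-- **Feng–Huang, Proposition 3.3**: for `Z ⊆ X`, `s ≥ 0` and `ε, δ > 0`, one has
`M^{s+δ}_{N,6ε}(Z) ≤ W^s_{N,ε}(Z) ≤ M^s_{N,ε}(Z)` whenever `N ≥ 2` is large enough that
`n² e^{-nδ} ≤ 1` for all `n ≥ N`.  Consequently `M^{s+δ}(Z) ≤ W^s(Z) ≤ M^s(Z)` and the
weighted Bowen topological entropy coincides with Bowen's topological entropy: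
`h^{WB}_top(T,Z) = h^B_top(T,Z)`. -/
theorem Mpre_le_Wpre_le_Mpre_and_weightedBowenEntropy_eq
    {X : Type*} [MetricSpace X] [CompactSpace X]
    (T : X → X) (hT : Continuous T) (Z : Set X)
    (s : ℝ) (hs : 0 ≤ s) (ε δ : ℝ) (hε : 0 < ε) (hδ : 0 < δ) :
    (∀ N : ℕ, 2 ≤ N → (∀ n : ℕ, N ≤ n → (n : ℝ) ^ 2 * Real.exp (-(n : ℝ) * δ) ≤ 1) →
      Mpre T (s + δ) N (6 * ε) Z ≤ WpreSet T s N ε Z ∧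
        WpreSet T s N ε Z ≤ Mpre T s N ε Z) ∧
    Mtop T (s + δ) Z ≤ Wtop T s Z ∧ Wtop T s Z ≤ Mtop T s Z ∧
    weightedBowenEntropy T Z = bowenEntropy T Z := by
  obtain ⟨hMW, hWM, h⟩ :=
    Mpre_le_Wpre_le_Mpre_and_weightedBowenEntropy_eq_general T Z s ε δ hε hδ
  exact ⟨fun N hN hNδ => ⟨(Mpre_anti_radius T (s + δ) N (by linarith) Z).trans
    (hMW N (tsum_Ici_exp_neg_mul_lt_one hN hNδ)), hWM N⟩, h⟩
end

section
/- Dynamical Frostman lemma: Let (X,T) be a topological dynamical system, K ⊆ X a non-empty compact set, s ≥ 0, N ∈ ℕ and ε > 0. Suppose c := W^s_{N,ε}(K) > 0. Then there exists a Borel probability measure μ on X such that μ(K) = 1 and μ(B_n(x,ε)) ≤ (1/c) e^{−ns} for every x ∈ X and every n ≥ N. -/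
/-!
Write `W = W^s_{N,ε}`, a functional on `[0, ∞]`-valued functions. Concatenating and rescaling
weighted families of balls shows that `W` is monotone and sublinear, and compactness of `K` that
`W(χ_K) < ∞`. These properties alone produce the measure. On `C(K, ℝ)` the functional
`p f = W(χ_K · f⁺)` is sublinear, so Hahn–Banach gives a linear `g ≤ p` with `g 1 = p 1 = W(χ_K)`;
it is positive because `p f = 0` for `f ≤ 0`, and Riesz–Markov–Kakutani turns it into a measure `μ`
on `K` of mass `W(χ_K)`. For an open set `U`, testing with continuous functions below `χ_U` gives
`μ(U) ≤ W(χ_U)`. Finally a single ball of weight `1` shows `W(χ_{B_n(x,ε)}) ≤ e^{-ns}`, and it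
remains to normalise `μ`.
-/

open Filter Set MeasureTheory Topology
open scoped ENNReal NNReal

lemma extend_comp_subtypeVal {X M : Type*} [Zero M] (K : Set X) (f : X → M) :
    Function.extend Subtype.val (f ∘ Subtype.val : K → M) 0 = K.indicator f := by
  funext x
  by_cases hx : x ∈ K
  · rw [indicator_of_mem hx]
    exact Subtype.val_injective.extend_apply _ _ (⟨x, hx⟩ : K)
  · rw [indicator_of_notMem hx, Function.extend_apply' _ _ _ (by simpa using hx), Pi.zero_apply]

section Sublinear

lemma exists_linearMap_eq_and_le_sublinear {E : Type*} [AddCommGroup E] [Module ℝ E] {p : E → ℝ}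
    (p_smul : ∀ t : ℝ, 0 < t → ∀ v, p (t • v) = t * p v) (p_add : ∀ v w, p (v + w) ≤ p v + p w)
    (v : E) : ∃ g : E →ₗ[ℝ] ℝ, g v = p v ∧ ∀ w, g w ≤ p w := by
  have p_zero : p 0 = 0 := by
    have := p_smul 2 two_pos 0
    rw [smul_zero] at this
    linarith
  have mul_le_smul (a : ℝ) : a * p v ≤ p (a • v) := by
    rcases lt_trichotomy a 0 with ha | rfl | ha
    · have h := p_add (a • v) (-a • v)
      rw [← add_smul, add_neg_cancel, zero_smul, p_zero, p_smul (-a) (neg_pos.2 ha)] at h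
      linarith
    · simp only [zero_mul, zero_smul, p_zero, le_refl]
    · exact (p_smul a ha v).ge
  have smul_eq_zero_of (a : ℝ) (h : a • v = 0) : RingHom.id ℝ a • p v = 0 := by
    rcases smul_eq_zero.1 h with rfl | rfl <;> simp [p_zero]
  obtain ⟨g, g_eq, g_le⟩ := exists_extension_of_le_sublinear
    (LinearPMap.mkSpanSingleton' v (p v) smul_eq_zero_of) p p_smul p_add (by
      rintro ⟨w, hw⟩
      obtain ⟨a, rfl⟩ := Submodule.mem_span_singleton.1 hw
      rw [LinearPMap.mkSpanSingleton'_apply]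
      exact mul_le_smul a)
  refine ⟨g, ?_, g_le⟩
  exact (g_eq ⟨v, Submodule.mem_span_singleton_self v⟩).trans
    (LinearPMap.mkSpanSingleton'_apply_self v (p v) smul_eq_zero_of _)

variable {Y : Type*} [TopologicalSpace Y] [CompactSpace Y] [T2Space Y] [MeasurableSpace Y]
  [BorelSpace Y]

lemma exists_regular_measure_integral_eq (Λ : C(Y, ℝ) →ₚ[ℝ] ℝ) :
    ∃ μ : Measure Y, μ.Regular ∧ ∀ f : C(Y, ℝ), ∫ y, f y ∂μ = Λ f := by
  let Λ' : CompactlySupportedContinuousMap Y ℝ →ₚ[ℝ] ℝ :=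
    { toFun f := Λ f.toContinuousMap
      map_add' f g := map_add Λ f.toContinuousMap g.toContinuousMap
      map_smul' t f := map_smul Λ t f.toContinuousMap
      monotone' _ _ hfg := OrderHomClass.mono Λ hfg }
  exact ⟨RealRMK.rieszMeasure Λ', inferInstance, fun f =>
    RealRMK.integral_rieszMeasure Λ' (CompactlySupportedContinuousMap.continuousMapEquiv f)⟩

lemma exists_regular_measure_integral_le_sublinear {p : C(Y, ℝ) → ℝ}
    (p_smul : ∀ t : ℝ, 0 < t → ∀ f, p (t • f) = t * p f) (p_add : ∀ f g, p (f + g) ≤ p f + p g)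
    (p_nonpos : ∀ f ≤ 0, p f ≤ 0) :
    ∃ μ : Measure Y, μ.Regular ∧ μ.real univ = p 1 ∧
      ∀ f : C(Y, ℝ), ∫ y, f y ∂μ ≤ p f := by
  obtain ⟨g, g_one, g_le⟩ := exists_linearMap_eq_and_le_sublinear p_smul p_add 1
  have g_nonneg (f : C(Y, ℝ)) (hf : 0 ≤ f) : 0 ≤ g f := by
    have : g (-f) ≤ 0 := (g_le _).trans (p_nonpos _ (neg_nonpos.2 hf))
    rwa [map_neg, neg_nonpos] at this
  obtain ⟨μ, hreg, hμ⟩ := exists_regular_measure_integral_eq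
    (PositiveLinearMap.mk₀ g g_nonneg)
  refine ⟨μ, hreg, ?_, fun f => (hμ f).trans_le (g_le f)⟩
  calc μ.real univ = ∫ y, (1 : C(Y, ℝ)) y ∂μ := by simp
    _ = p 1 := (hμ 1).trans g_one

lemma measure_le_of_forall_integral_le {μ : Measure Y} [μ.Regular] {U : Set Y} (hU : IsOpen U)
    {r : ℝ≥0∞}
    (h : ∀ f : C(Y, ℝ), 0 ≤ f → (∀ y, f y ≤ U.indicator 1 y) → ENNReal.ofReal (∫ y, f y ∂μ) ≤ r) :
    μ U ≤ r := by
  rw [hU.measure_eq_iSup_isCompact]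
  refine iSup₂_le fun A hAU => iSup_le fun hA => ?_
  obtain ⟨f, f_zero, f_one, f_mem⟩ := exists_continuous_zero_one_of_isClosed hU.isClosed_compl
    hA.isClosed (disjoint_compl_left_iff_subset.2 hAU)
  have f_le (y : Y) : f y ≤ U.indicator 1 y := by
    by_cases hy : y ∈ U
    · rw [indicator_of_mem hy]
      exact (f_mem y).2
    · rw [indicator_of_notMem hy, f_zero hy, Pi.zero_apply]
  have f_integrable : Integrable f μ := f.continuous.integrable_of_hasCompactSupport
    (.of_compactSpace f)
  calc μ A ≤ ENNReal.ofReal (∫ y, f y ∂μ) := by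
        rw [ofReal_integral_eq_lintegral_ofReal f_integrable (ae_of_all μ fun y => (f_mem y).1),
          ← lintegral_indicator_one hA.measurableSet]
        refine lintegral_mono (indicator_le fun y hy => ?_)
        simp only [f_one hy, Pi.one_apply, ENNReal.ofReal_one, le_refl]
    _ ≤ r := h f (fun y => (f_mem y).1) f_le

end Sublinear

/-- A monotone sublinear functional on `[0, ∞]`-valued functions, such as an upper integral or the
weighted Carathéodory content `W^s_{N,ε}`. Homogeneity is stated as an inequality, which suffices
since it can be applied to `t` and `t⁻¹`. -/
structure IsMonotoneSublinear {X : Type*} (W : (X → ℝ≥0∞) → ℝ≥0∞) : Prop where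
  mono : Monotone W
  add_le : ∀ f g, W (f + g) ≤ W f + W g
  smul_le : ∀ (t : ℝ≥0) f, W (t • f) ≤ t * W f

namespace IsMonotoneSublinear

variable {X : Type*} {W : (X → ℝ≥0∞) → ℝ≥0∞}

lemma map_zero (hW : IsMonotoneSublinear W) : W 0 = 0 := by
  simpa using hW.smul_le 0 0

lemma map_smul (hW : IsMonotoneSublinear W) {t : ℝ≥0} (ht : t ≠ 0) (f : X → ℝ≥0∞) :
    W (t • f) = t * W f := by
  refine le_antisymm (hW.smul_le t f) ?_
  calc t * W f = t * W (t⁻¹ • t • f) := by rw [inv_smul_smul₀ ht]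
    _ ≤ t * (↑t⁻¹ * W (t • f)) := by gcongr; exact hW.smul_le t⁻¹ (t • f)
    _ = W (t • f) := by
      rw [← mul_assoc, ← ENNReal.coe_mul, mul_inv_cancel₀ ht, ENNReal.coe_one, one_mul]

lemma comp_extend (hW : IsMonotoneSublinear W) {Y : Type*} (e : Y → X) :
    IsMonotoneSublinear fun f : Y → ℝ≥0∞ => W (Function.extend e f 0) where
  mono f g hfg := hW.mono fun x => by
    classical
    simp only [Function.extend_def]
    split_ifs
    exacts [hfg _, le_rfl]
  add_le f g := by
    simpa only [← Function.extend_add, add_zero] using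
      hW.add_le (Function.extend e f 0) (Function.extend e g 0)
  smul_le t f := by
    simpa only [← Function.extend_smul, smul_zero] using hW.smul_le t (Function.extend e f 0)

section PosPart

variable {Y : Type*} [TopologicalSpace Y] {V : (Y → ℝ≥0∞) → ℝ≥0∞}

/-- The real-valued functional `f ↦ V(f⁺)` on `C(Y, ℝ)`: `ENNReal.ofReal` truncates negative values
to `0`, and the value `∞` (which is turned into `0`) does not occur when `V 1 < ∞`. -/
noncomputable def posPartValue (V : (Y → ℝ≥0∞) → ℝ≥0∞) (f : C(Y, ℝ)) : ℝ :=
  (V (ENNReal.ofReal ∘ f)).toReal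

lemma posPartValue_one (V : (Y → ℝ≥0∞) → ℝ≥0∞) : posPartValue V 1 = (V 1).toReal := by
  have : ENNReal.ofReal ∘ (1 : C(Y, ℝ)) = 1 := funext fun _ => ENNReal.ofReal_one
  rw [posPartValue, this]

lemma posPartValue_of_nonpos (hV : IsMonotoneSublinear V) {f : C(Y, ℝ)} (hf : f ≤ 0) :
    posPartValue V f = 0 := by
  have : ENNReal.ofReal ∘ f = 0 := funext fun y => ENNReal.ofReal_of_nonpos (hf y)
  rw [posPartValue, this, hV.map_zero, ENNReal.toReal_zero]

lemma posPartValue_smul (hV : IsMonotoneSublinear V) {t : ℝ} (ht : 0 < t) (f : C(Y, ℝ)) :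
    posPartValue V (t • f) = t * posPartValue V f := by
  have : ENNReal.ofReal ∘ (t • f) = t.toNNReal • (ENNReal.ofReal ∘ f) :=
    funext fun _ => ENNReal.ofReal_mul ht.le
  rw [posPartValue, this, hV.map_smul (Real.toNNReal_pos.2 ht).ne', ENNReal.toReal_mul,
    ENNReal.coe_toReal, Real.coe_toNNReal t ht.le, posPartValue]

variable [CompactSpace Y]

lemma ofReal_comp_ne_top (hV : IsMonotoneSublinear V) (hfin : V 1 ≠ ∞) (f : C(Y, ℝ)) :
    V (ENNReal.ofReal ∘ f) ≠ ∞ := by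
  have f_le : ENNReal.ofReal ∘ f ≤ ‖f‖₊ • (1 : Y → ℝ≥0∞) := fun y => by
    simp only [Function.comp_apply, Pi.smul_apply, Pi.one_apply, ENNReal.smul_def, smul_eq_mul,
      mul_one]
    exact ENNReal.coe_le_coe.2 (Real.toNNReal_le_iff_le_coe.2 (f.apply_le_norm y))
  exact ne_top_of_le_ne_top (ENNReal.mul_ne_top ENNReal.coe_ne_top hfin)
    ((hV.mono f_le).trans (hV.smul_le _ _))

lemma posPartValue_add_le (hV : IsMonotoneSublinear V) (hfin : V 1 ≠ ∞) (f g : C(Y, ℝ)) :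
    posPartValue V (f + g) ≤ posPartValue V f + posPartValue V g := by
  have hf := hV.ofReal_comp_ne_top hfin f
  have hg := hV.ofReal_comp_ne_top hfin g
  rw [posPartValue, posPartValue, posPartValue, ← ENNReal.toReal_add hf hg]
  exact ENNReal.toReal_mono (ENNReal.add_ne_top.2 ⟨hf, hg⟩) <|
    (hV.mono fun _ => ENNReal.ofReal_add_le).trans (hV.add_le _ _)

theorem exists_measure_of_compactSpace [T2Space Y] [MeasurableSpace Y] [BorelSpace Y]
    (hV : IsMonotoneSublinear V) (hfin : V 1 ≠ ∞) :
    ∃ μ : Measure Y, μ univ = V 1 ∧ ∀ U, IsOpen U → μ U ≤ V (U.indicator 1) := by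
  obtain ⟨μ, hreg, μ_univ, μ_le⟩ := exists_regular_measure_integral_le_sublinear
    (fun t ht f => hV.posPartValue_smul ht f) (hV.posPartValue_add_le hfin)
    (fun f hf => (hV.posPartValue_of_nonpos hf).le)
  refine ⟨μ, ?_, fun U hU => measure_le_of_forall_integral_le hU fun f _ f_le => ?_⟩
  · rwa [posPartValue_one, measureReal_def,
      ENNReal.toReal_eq_toReal_iff' (measure_ne_top μ univ) hfin] at μ_univ
  · have ofReal_f_le : ENNReal.ofReal ∘ f ≤ U.indicator 1 := fun y => by
      by_cases hy : y ∈ U <;> simpa [hy] using f_le y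
    calc ENNReal.ofReal (∫ y, f y ∂μ) ≤ ENNReal.ofReal (posPartValue V f) :=
          ENNReal.ofReal_le_ofReal (μ_le f)
      _ = V (ENNReal.ofReal ∘ f) := ENNReal.ofReal_toReal (hV.ofReal_comp_ne_top hfin f)
      _ ≤ V (U.indicator 1) := hV.mono ofReal_f_le

end PosPart

theorem exists_measure_of_isCompact [TopologicalSpace X] [T2Space X] [MeasurableSpace X]
    [BorelSpace X] (hW : IsMonotoneSublinear W) {K : Set X} (hK : IsCompact K)
    (hfin : W (K.indicator 1) ≠ ∞) :
    ∃ μ : Measure X, μ univ = W (K.indicator 1) ∧ μ K = W (K.indicator 1) ∧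
      ∀ U, IsOpen U → μ U ≤ W (U.indicator 1) := by
  have : CompactSpace K := isCompact_iff_compactSpace.1 hK
  have extend_one : Function.extend Subtype.val (1 : K → ℝ≥0∞) 0 = K.indicator 1 :=
    extend_comp_subtypeVal K 1
  have extend_indicator_le (U : Set X) :
      Function.extend Subtype.val ((Subtype.val ⁻¹' U : Set K).indicator 1) 0
        ≤ U.indicator (1 : X → ℝ≥0∞) :=
    (extend_comp_subtypeVal K (U.indicator 1)).trans_le (indicator_le_self _ _)
  obtain ⟨ν, ν_univ, ν_le⟩ := (hW.comp_extend ((↑) : K → X)).exists_measure_of_compactSpace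
    (by rwa [extend_one])
  rw [extend_one] at ν_univ
  refine ⟨ν.map (↑), ?_, ?_, fun U hU => ?_⟩
  · rwa [Measure.map_apply measurable_subtype_coe .univ, preimage_univ]
  · rwa [Measure.map_apply measurable_subtype_coe hK.measurableSet, Subtype.coe_preimage_self]
  · rw [Measure.map_apply measurable_subtype_coe hU.measurableSet]
    exact (ν_le _ (hU.preimage continuous_subtype_val)).trans (hW.mono (extend_indicator_le U))

end IsMonotoneSublinear

section BowenBall

variable {X : Type*} [MetricSpace X] {T : X → X} {ε : ℝ}

lemma isOpen_bowenBall (hT : Continuous T) (x : X) (n : ℕ) : IsOpen (bowenBall T x n ε) := by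
  simp only [bowenBall, ofPred_forall]
  exact (finite_lt_nat n).isOpen_biInter fun k _ =>
    isOpen_lt (continuous_const.dist (hT.iterate k)) continuous_const

lemma mem_bowenBall_self (hε : 0 < ε) (x : X) (n : ℕ) : x ∈ bowenBall T x n ε :=
  fun k _ => by rwa [dist_self]

end BowenBall

/-- A weighted family of Bowen balls that is admissible in the definition of `W^s_{N,ε}(f)`, over an
arbitrary index type `ι` so that families can be concatenated without re-indexing. -/
structure WeightedCover {X : Type*} [MetricSpace X] (T : X → X) (N : ℕ) (ε : ℝ) (f : X → ℝ≥0∞)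
    (ι : Type*) where
  center : ι → X
  order : ι → ℕ
  weight : ι → ℝ≥0∞
  weight_pos : ∀ i, 0 < weight i
  weight_lt_top : ∀ i, weight i < ∞
  le_order : ∀ i, N ≤ order i
  le_tsum : ∀ y, f y ≤ ∑' i, (bowenBall T (center i) (order i) ε).indicator (fun _ => weight i) y

namespace WeightedCover

variable {X : Type*} [MetricSpace X] {T : X → X} {N : ℕ} {ε : ℝ} {f g : X → ℝ≥0∞} {ι κ : Type*}

/-- The sum `Σ_i c_i exp (- s n_i)` over the family, whose infimum is `W^s_{N,ε}(f)`. -/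
noncomputable def cost (s : ℝ) (C : WeightedCover T N ε f ι) : ℝ≥0∞ :=
  ∑' i, C.weight i * ENNReal.ofReal (Real.exp (-s * C.order i))

/-- The same family, regarded as a cover of a smaller function. -/
def mono (C : WeightedCover T N ε g ι) (hfg : f ≤ g) : WeightedCover T N ε f ι :=
  { C with le_tsum := fun y => (hfg y).trans (C.le_tsum y) }

/-- The concatenation of two families. -/
def add (C : WeightedCover T N ε f ι) (D : WeightedCover T N ε g κ) :
    WeightedCover T N ε (f + g) (ι ⊕ κ) where
  center := Sum.elim C.center D.center
  order := Sum.elim C.order D.order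
  weight := Sum.elim C.weight D.weight
  weight_pos := Sum.rec C.weight_pos D.weight_pos
  weight_lt_top := Sum.rec C.weight_lt_top D.weight_lt_top
  le_order := Sum.rec C.le_order D.le_order
  le_tsum y := by
    rw [Summable.tsum_sum ENNReal.summable ENNReal.summable]
    exact add_le_add (C.le_tsum y) (D.le_tsum y)

lemma cost_add (s : ℝ) (C : WeightedCover T N ε f ι) (D : WeightedCover T N ε g κ) :
    (C.add D).cost s = C.cost s + D.cost s :=
  Summable.tsum_sum ENNReal.summable ENNReal.summable

/-- The family with all weights multiplied by `t`. -/
noncomputable def smul (C : WeightedCover T N ε f ι) {t : ℝ≥0} (ht : t ≠ 0) :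
    WeightedCover T N ε (t • f) ι where
  center := C.center
  order := C.order
  weight i := t * C.weight i
  weight_pos i := ENNReal.mul_pos (ENNReal.coe_ne_zero.2 ht) (C.weight_pos i).ne'
  weight_lt_top i := ENNReal.mul_lt_top ENNReal.coe_lt_top (C.weight_lt_top i)
  le_order := C.le_order
  le_tsum y := by
    simp only [Pi.smul_apply, ENNReal.smul_def, smul_eq_mul, indicator_const_mul,
      ENNReal.tsum_mul_left]
    gcongr
    exact C.le_tsum y

lemma cost_smul (s : ℝ) (C : WeightedCover T N ε f ι) {t : ℝ≥0} (ht : t ≠ 0) :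
    (C.smul ht).cost s = t * C.cost s := by
  simp only [cost, smul, mul_assoc, ENNReal.tsum_mul_left]

/-- A family of balls covering `Z`, with all weights equal to `1`. -/
def ofCover {Z : Set X} (x : ι → X) (n : ι → ℕ) (hn : ∀ i, N ≤ n i)
    (hZ : Z ⊆ ⋃ i, bowenBall T (x i) (n i) ε) : WeightedCover T N ε (Z.indicator 1) ι where
  center := x
  order := n
  weight _ := 1
  weight_pos _ := one_pos
  weight_lt_top _ := ENNReal.one_lt_top
  le_order := hn
  le_tsum := by
    refine indicator_le fun y hy => ?_
    obtain ⟨i, hi⟩ := mem_iUnion.1 (hZ hy)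
    refine le_trans ?_ (ENNReal.le_tsum i)
    rw [indicator_of_mem hi, Pi.one_apply]

lemma Wpre_le_cost [Nonempty X] [Countable ι] (s : ℝ) (C : WeightedCover T N ε f ι) :
    Wpre T s N ε f ≤ C.cost s := by
  obtain ⟨e, he⟩ := exists_injective_nat ι
  let x : ℕ → X := Function.extend e C.center fun _ => Classical.arbitrary X
  let n : ℕ → ℕ := Function.extend e C.order 0
  let c : ℕ → ℝ≥0∞ := Function.extend e C.weight 0
  have hx (i : ι) : x (e i) = C.center i := he.extend_apply _ _ _
  have hn (i : ι) : n (e i) = C.order i := he.extend_apply _ _ _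
  have hc (i : ι) : c (e i) = C.weight i := he.extend_apply _ _ _
  have admissible : ∀ j ∈ range e, 0 < c j ∧ c j < ∞ ∧ N ≤ n j := by
    rintro _ ⟨i, rfl⟩
    rw [hc, hn]
    exact ⟨C.weight_pos i, C.weight_lt_top i, C.le_order i⟩
  have covers (y : X) :
      f y ≤ ∑' j : range e, (bowenBall T (x j) (n j) ε).indicator (fun _ => c j) y := by
    rw [tsum_range (fun j => (bowenBall T (x j) (n j) ε).indicator (fun _ => c j) y) he]
    simpa only [hx, hn, hc] using C.le_tsum y
  have cost_eq : ∑' j : range e, c j * ENNReal.ofReal (Real.exp (-s * n j)) = C.cost s := by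
    rw [tsum_range (fun j => c j * ENNReal.ofReal (Real.exp (-s * n j))) he]
    simp only [hn, hc, cost]
  exact iInf_le_of_le (range e) <| iInf_le_of_le x <| iInf_le_of_le n <| iInf_le_of_le c <|
    iInf_le_of_le admissible <| iInf_le_of_le covers cost_eq.le

end WeightedCover

section Weighted

variable {X : Type*} [MetricSpace X] [Nonempty X] {T : X → X} {s : ℝ} {N : ℕ} {ε : ℝ}

lemma Wpre_eq_iInf_cost (f : X → ℝ≥0∞) :
    Wpre T s N ε f = ⨅ C : Σ I : Set ℕ, WeightedCover T N ε f I, C.2.cost s := by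
  refine le_antisymm (le_iInf fun C => C.2.Wpre_le_cost s) ?_
  simp only [Wpre, le_iInf_iff]
  intro I x n c admissible covers
  exact iInf_le_of_le ⟨I, {
    center i := x i
    order i := n i
    weight i := c i
    weight_pos i := (admissible i i.2).1
    weight_lt_top i := (admissible i i.2).2.1
    le_order i := (admissible i i.2).2.2
    le_tsum := covers }⟩ le_rfl

lemma WpreSet_le_tsum {ι : Type*} [Countable ι] {Z : Set X} (x : ι → X) (n : ι → ℕ)
    (hn : ∀ i, N ≤ n i) (hZ : Z ⊆ ⋃ i, bowenBall T (x i) (n i) ε) :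
    WpreSet T s N ε Z ≤ ∑' i, ENNReal.ofReal (Real.exp (-s * n i)) :=
  ((WeightedCover.ofCover x n hn hZ).Wpre_le_cost s).trans_eq <|
    tsum_congr fun _ => one_mul _

lemma Wpre_zero : Wpre T s N ε 0 = 0 := by
  have h := WpreSet_le_tsum (T := T) (s := s) (N := N) (ε := ε) (Z := ∅) Empty.elim Empty.elim
    (fun i => i.elim) (empty_subset _)
  rwa [WpreSet, indicator_empty', tsum_empty, nonpos_iff_eq_zero] at h

lemma isMonotoneSublinear_Wpre : IsMonotoneSublinear (Wpre T s N ε) where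
  mono f g hfg := by
    rw [Wpre_eq_iInf_cost g]
    exact le_iInf fun C => (C.2.mono hfg).Wpre_le_cost s
  add_le f g := by
    rw [Wpre_eq_iInf_cost f, Wpre_eq_iInf_cost g]
    exact ENNReal.le_iInf_add_iInf fun C D =>
      ((C.2.add D.2).Wpre_le_cost s).trans_eq (C.2.cost_add s D.2)
  smul_le t f := by
    rcases eq_or_ne t 0 with rfl | ht
    · rw [zero_smul, Wpre_zero]
      exact zero_le
    · rw [Wpre_eq_iInf_cost f, ENNReal.mul_iInf_of_ne (ENNReal.coe_ne_zero.2 ht) ENNReal.coe_ne_top]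
      exact le_iInf fun C => ((C.2.smul ht).Wpre_le_cost s).trans_eq (C.2.cost_smul s ht)

lemma WpreSet_bowenBall_le (x : X) {n : ℕ} (hn : N ≤ n) :
    WpreSet T s N ε (bowenBall T x n ε) ≤ ENNReal.ofReal (Real.exp (-s * n)) := by
  simpa only [tsum_fintype, Finset.univ_unique, Finset.sum_singleton] using
    WpreSet_le_tsum (fun _ : Unit => x) (fun _ => n) (fun _ => hn)
      (subset_iUnion (fun _ : Unit => bowenBall T x n ε) ())

lemma WpreSet_ne_top_of_isCompact (hT : Continuous T) (hε : 0 < ε) {K : Set X} (hK : IsCompact K) :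
    WpreSet T s N ε K ≠ ∞ := by
  obtain ⟨t, ht⟩ := hK.elim_finite_subcover (fun x => bowenBall T x N ε)
    (fun x => isOpen_bowenBall hT x N)
    (fun x _ => mem_iUnion.2 ⟨x, mem_bowenBall_self hε x N⟩)
  replace ht : K ⊆ ⋃ x : t, bowenBall T (x : X) N ε := by rwa [iUnion_subtype]
  refine ne_top_of_le_ne_top ?_
    (WpreSet_le_tsum (fun x : t => (x : X)) (fun _ => N) (fun _ => le_rfl) ht)
  rw [tsum_fintype]
  exact ENNReal.sum_ne_top.2 fun _ _ => ENNReal.ofReal_ne_top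

end Weighted

theorem dynamical_frostman_general
    {X : Type*} [MetricSpace X] [MeasurableSpace X] [BorelSpace X]
    (T : X → X) (hT : Continuous T) (K : Set X) (hne : K.Nonempty) (hK : IsCompact K)
    (s : ℝ) (N : ℕ) (ε : ℝ) (hε : 0 < ε) (hc : 0 < WpreSet T s N ε K) :
    ∃ μ : Measure X, IsProbabilityMeasure μ ∧ μ K = 1 ∧
      ∀ x : X, ∀ n : ℕ, N ≤ n →
        μ (bowenBall T x n ε) ≤
          (WpreSet T s N ε K)⁻¹ * ENNReal.ofReal (Real.exp (-(n : ℝ) * s)) := by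
  have : Nonempty X := hne.to_type
  have hfin : WpreSet T s N ε K ≠ ∞ := WpreSet_ne_top_of_isCompact hT hε hK
  obtain ⟨μ, μ_univ, μ_K, μ_open⟩ :=
    isMonotoneSublinear_Wpre.exists_measure_of_isCompact hK hfin
  have inv_mul_self : (WpreSet T s N ε K)⁻¹ * WpreSet T s N ε K = 1 :=
    ENNReal.inv_mul_cancel hc.ne' hfin
  refine ⟨(WpreSet T s N ε K)⁻¹ • μ, ⟨?_⟩, ?_, fun x n hn => ?_⟩
  · rw [Measure.smul_apply, μ_univ, smul_eq_mul, ← WpreSet, inv_mul_self]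
  · rw [Measure.smul_apply, μ_K, smul_eq_mul, ← WpreSet, inv_mul_self]
  · rw [Measure.smul_apply, smul_eq_mul, neg_mul, mul_comm (n : ℝ), ← neg_mul]
    gcongr
    exact (μ_open _ (isOpen_bowenBall hT x n)).trans (WpreSet_bowenBall_le x hn)

/-- **Dynamical Frostman's lemma** (Feng–Huang, Lemma 3.4): let `K` be a non-empty
compact subset of `X`, `s ≥ 0`, `N ∈ ℕ` and `ε > 0`, and suppose
`c := W^s_{N,ε}(K) > 0`.  Then there is a Borel probability measure `μ` on `X` with
`μ(K) = 1` and `μ(B_n(x,ε)) ≤ (1/c) e^{-ns}` for all `x ∈ X` and all `n ≥ N`. -/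
theorem dynamical_frostman
    {X : Type*} [MetricSpace X] [CompactSpace X] [MeasurableSpace X] [BorelSpace X]
    (T : X → X) (hT : Continuous T) (K : Set X) (hne : K.Nonempty) (hK : IsCompact K)
    (s : ℝ) (hs : 0 ≤ s) (N : ℕ) (ε : ℝ) (hε : 0 < ε)
    (hc : 0 < WpreSet T s N ε K) :
    ∃ μ : Measure X, IsProbabilityMeasure μ ∧ μ K = 1 ∧
      ∀ x : X, ∀ n : ℕ, N ≤ n →
        μ (bowenBall T x n ε) ≤
          (WpreSet T s N ε K)⁻¹ * ENNReal.ofReal (Real.exp (-(n : ℝ) * s)) :=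
  dynamical_frostman_general T hT K hne hK s N ε hε hc
end

section
/- Increasing sets lemma: Let (X,T) be a topological dynamical system and 𝒰 a finite partition of X into closed-open sets. Let s ≥ 0 and N ∈ ℕ. If E_1 ⊆ E_2 ⊆ ⋯ are subsets of X and E = ⋃_i E_i, then M^s_N(𝒰, E) = lim_{i→∞} M^s_N(𝒰, E_i). -/
/-!
Order the admissible strings by the prefix relation. Cylinders shrink along this order, and two
strings whose cylinders share a point are comparable because the letters are disjoint. So the
minimal strings of a family cover what the family covers. If `κ(A)` denotes the total weight of the
minimal strings of `A`, and `A`, `B` cover `Y`, `Z`, then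

  `κ(A ∪ B) + M(Y ∩ Z) ≤ κ(A) + κ(B)`:

a minimal string of `A` and one of `B` whose cylinders contain the same point of `Y ∩ Z` either
coincide, and are counted only once in `κ(A ∪ B)`, or the longer one is not minimal in `A ∪ B`. So
the strings left over on the right cover `Y ∩ Z`.

Given covers `Λ n` of `E n` of weight at most `M(E n) + δ n`, this yields by induction
`κ(Λ 0 ∪ ⋯ ∪ Λ n) ≤ M(E n) + δ 0 + ⋯ + δ n`. A string that is minimal in `⋃ Λ n` is minimal in every
partial union containing it, so the bound passes to `κ(⋃ Λ n)`, which bounds `M(⋃ E n)`.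
-/

open Filter Set MeasureTheory Topology
open scoped ENNReal NNReal

section CoverMeasure

variable {X : Type*} [MetricSpace X]

/-- For a string `u = U₁…U_n` of elements of a cover, the set
`X(u) = U₁ ∩ T⁻¹U₂ ∩ ⋯ ∩ T^{-(n-1)}U_n`. -/
def stringSet (T : X → X) : List (Set X) → Set X
  | [] => Set.univ
  | U :: l => U ∩ T ⁻¹' stringSet T l

/-- `M^s_N(𝒰, Z) = inf_Λ Σ_{u ∈ Λ} e^{-s·m(u)}`, the infimum being over all families
`Λ` of strings of elements of `𝒰`, each of length `m(u) ≥ N`, such that the sets `X(u)`,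
`u ∈ Λ`, cover `Z`. -/
noncomputable def coverM (T : X → X) (U : Finset (Set X)) (s : ℝ) (N : ℕ) (Z : Set X) :
    ℝ≥0∞ :=
  ⨅ (Λ : Set (List (Set X)))
    (_ : ∀ u ∈ Λ, (∀ V ∈ u, V ∈ U) ∧ N ≤ u.length)
    (_ : Z ⊆ ⋃ u ∈ Λ, stringSet T u),
    ∑' u : Λ, ENNReal.ofReal (Real.exp (-s * (u : List (Set X)).length))

end CoverMeasure

section FamilyCost

variable {α X : Type*}

/-- The least total weight of a family of indices whose sets `S a` cover `Z`, that is, `M^s_N(𝒰, Z)`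
for an arbitrary weighted family of sets in place of the cylinders `X(u)`. -/
noncomputable def coverCost (S : α → Set X) (w : α → ℝ≥0∞) (Z : Set X) : ℝ≥0∞ :=
  ⨅ (Λ : Set α) (_ : Z ⊆ ⋃ a ∈ Λ, S a), ∑' a : Λ, w a

/-- The total weight of the minimal elements of `A`: the cost of `A` once its redundant elements
have been discarded. -/
noncomputable def minimalCost [LE α] (w : α → ℝ≥0∞) (A : Set α) : ℝ≥0∞ :=
  ∑' a : {a | Minimal (· ∈ A) a}, w a

lemma tsum_union_add_tsum_inter (w : α → ℝ≥0∞) (A B : Set α) :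
    ∑' a : ↑(A ∪ B), w a + ∑' a : ↑(A ∩ B), w a = ∑' a : A, w a + ∑' a : B, w a := by
  simp only [tsum_subtype, ← ENNReal.tsum_add, ← indicator_union_add_inter_apply w A B]

lemma tsum_add_tsum_inter_union_diff_le (w : α → ℝ≥0∞) {P A B : Set α} (hP : P ⊆ A ∪ B) :
    ∑' a : P, w a + ∑' a : ↑(A ∩ B ∪ (A ∪ B) \ P), w a ≤ ∑' a : A, w a + ∑' a : B, w a :=
  calc ∑' a : P, w a + ∑' a : ↑(A ∩ B ∪ (A ∪ B) \ P), w a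
      ≤ ∑' a : P, w a + (∑' a : ↑(A ∩ B), w a + ∑' a : ↑((A ∪ B) \ P), w a) := by
        gcongr
        exact ENNReal.tsum_union_le w _ _
    _ = ∑' a : P, w a + ∑' a : ↑((A ∪ B) \ P), w a + ∑' a : ↑(A ∩ B), w a := by ring
    _ = ∑' a : ↑(A ∪ B), w a + ∑' a : ↑(A ∩ B), w a := by
        rw [← ENNReal.summable.tsum_union_disjoint disjoint_sdiff_right ENNReal.summable,
          union_sdiff_cancel hP]
    _ = ∑' a : A, w a + ∑' a : B, w a := tsum_union_add_tsum_inter w A B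

section CoverCost

variable {S : α → Set X} {w : α → ℝ≥0∞} {Y Z : Set X}

lemma coverCost_le_tsum {Λ : Set α} (hZ : Z ⊆ ⋃ a ∈ Λ, S a) :
    coverCost S w Z ≤ ∑' a : Λ, w a :=
  iInf₂_le Λ hZ

lemma exists_tsum_lt_of_coverCost_lt {c : ℝ≥0∞} (h : coverCost S w Z < c) :
    ∃ Λ : Set α, Z ⊆ ⋃ a ∈ Λ, S a ∧ ∑' a : Λ, w a < c := by
  simpa only [coverCost, iInf_lt_iff, exists_prop] using h

lemma coverCost_mono (h : Y ⊆ Z) : coverCost S w Y ≤ coverCost S w Z :=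
  le_iInf₂ fun _ hZ => coverCost_le_tsum (h.trans hZ)

end CoverCost

lemma minimalCost_le_tsum [LE α] (w : α → ℝ≥0∞) (A : Set α) : minimalCost w A ≤ ∑' a : A, w a :=
  ENNReal.tsum_mono_subtype w fun _ ha => ha.prop

lemma minimalCost_iUnion_le {ι : Type*} [Nonempty ι] [LE α] (w : α → ℝ≥0∞) {A : ι → Set α}
    (hA : Directed (· ⊆ ·) A) : minimalCost w (⋃ i, A i) ≤ ⨆ i, minimalCost w (A i) := by
  refine ENNReal.summable.tsum_le_of_sum_le fun F => ?_
  let G : Finset α := F.map (Function.Embedding.subtype _)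
  have hG : ∀ a ∈ G, Minimal (· ∈ ⋃ i, A i) a := by
    intro a ha
    obtain ⟨b, -, rfl⟩ := Finset.mem_map.1 ha
    exact b.2
  obtain ⟨i, hi⟩ := hA.exists_mem_subset_of_finset_subset_biUnion fun a ha => (hG a ha).prop
  calc ∑ a ∈ F, w a
      = ∑' a : (G : Set α), w a := by
        rw [Finset.tsum_subtype', Finset.sum_map]
        rfl
    _ ≤ minimalCost w (A i) := ENNReal.tsum_mono_subtype w fun a ha =>
        (hG a ha).mono (fun _ hb => mem_iUnion_of_mem i hb) (hi ha)
    _ ≤ ⨆ i, minimalCost w (A i) := le_iSup (fun i => minimalCost w (A i)) i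

section Covering

variable {S : α → Set X} {w : α → ℝ≥0∞}

lemma exists_minimal_mem [Preorder α] [WellFoundedLT α] (hS : Antitone S) {A : Set α} {x : X}
    (hx : x ∈ ⋃ a ∈ A, S a) : ∃ a, Minimal (· ∈ A) a ∧ x ∈ S a := by
  obtain ⟨a, haA, hxa⟩ := mem_iUnion₂.1 hx
  obtain ⟨b, hba, hb⟩ := exists_minimal_le_of_wellFoundedLT (· ∈ A) a haA
  exact ⟨b, hb, hS hba hxa⟩

lemma coverCost_le_minimalCost [Preorder α] [WellFoundedLT α] (hS : Antitone S) {A : Set α}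
    {Z : Set X} (hZ : Z ⊆ ⋃ a ∈ A, S a) : coverCost S w Z ≤ minimalCost w A :=
  coverCost_le_tsum fun _ hx =>
    let ⟨_, ha, hxa⟩ := exists_minimal_mem hS (hZ hx)
    mem_biUnion ha hxa

variable [PartialOrder α] [WellFoundedLT α]

lemma minimalCost_union_add_coverCost_inter_le (hS : Antitone S)
    (hchain : ∀ x, IsChain (· ≤ ·) {a | x ∈ S a}) {A B : Set α} {Y Z : Set X}
    (hY : Y ⊆ ⋃ a ∈ A, S a) (hZ : Z ⊆ ⋃ a ∈ B, S a) :
    minimalCost w (A ∪ B) + coverCost S w (Y ∩ Z) ≤ minimalCost w A + minimalCost w B := by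
  set P := {a | Minimal (· ∈ A ∪ B) a}
  set A' := {a | Minimal (· ∈ A) a}
  set B' := {a | Minimal (· ∈ B) a}
  have hP : P ⊆ A' ∪ B' := fun a ha => ha.prop.imp
    (ha.mono fun _ => Or.inl) (ha.mono fun _ => Or.inr)
  have hrest : Y ∩ Z ⊆ ⋃ a ∈ A' ∩ B' ∪ (A' ∪ B') \ P, S a := by
    rintro x ⟨hxY, hxZ⟩
    obtain ⟨a, ha, hxa⟩ := exists_minimal_mem hS (hY hxY)
    obtain ⟨b, hb, hxb⟩ := exists_minimal_mem hS (hZ hxZ)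
    obtain rfl | hab := eq_or_ne a b
    · exact mem_biUnion (Or.inl ⟨ha, hb⟩) hxa
    rcases hchain x hxa hxb hab with hle | hle
    · refine mem_biUnion (Or.inr ⟨Or.inr hb, fun hbP => hab ?_⟩) hxb
      exact hbP.eq_of_le (Or.inl ha.prop) hle
    · refine mem_biUnion (Or.inr ⟨Or.inl ha, fun haP => hab ?_⟩) hxa
      exact (haP.eq_of_le (Or.inr hb.prop) hle).symm
  calc minimalCost w (A ∪ B) + coverCost S w (Y ∩ Z)
      ≤ ∑' a : P, w a + ∑' a : ↑(A' ∩ B' ∪ (A' ∪ B') \ P), w a :=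
        add_le_add_right (coverCost_le_tsum hrest) _
    _ ≤ minimalCost w A + minimalCost w B := tsum_add_tsum_inter_union_diff_le w hP

lemma minimalCost_accumulate_le (hS : Antitone S) (hchain : ∀ x, IsChain (· ≤ ·) {a | x ∈ S a})
    {E : ℕ → Set X} (hE : Monotone E) (hfin : ∀ n, coverCost S w (E n) ≠ ⊤)
    {Λ : ℕ → Set α} (hcov : ∀ n, E n ⊆ ⋃ a ∈ Λ n, S a) {δ : ℕ → ℝ≥0∞}
    (hcost : ∀ n, ∑' a : Λ n, w a ≤ coverCost S w (E n) + δ n) (n : ℕ) :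
    minimalCost w (accumulate Λ n) ≤ coverCost S w (E n) + ∑ i ∈ Finset.range (n + 1), δ i := by
  induction n with
  | zero => simpa using (minimalCost_le_tsum w (Λ 0)).trans (hcost 0)
  | succ n ih =>
    have hcov_acc : E n ⊆ ⋃ a ∈ accumulate Λ n, S a :=
      (hcov n).trans (biUnion_subset_biUnion_left subset_accumulate)
    refine (ENNReal.add_le_add_iff_right (hfin n)).1 ?_
    calc minimalCost w (accumulate Λ (n + 1)) + coverCost S w (E n)
        = minimalCost w (accumulate Λ n ∪ Λ (n + 1)) + coverCost S w (E n ∩ E (n + 1)) := by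
          rw [accumulate_succ, inter_eq_left.2 (hE n.le_succ)]
      _ ≤ minimalCost w (accumulate Λ n) + minimalCost w (Λ (n + 1)) :=
          minimalCost_union_add_coverCost_inter_le hS hchain hcov_acc (hcov (n + 1))
      _ ≤ (coverCost S w (E n) + ∑ i ∈ Finset.range (n + 1), δ i)
          + (coverCost S w (E (n + 1)) + δ (n + 1)) :=
          add_le_add ih ((minimalCost_le_tsum w _).trans (hcost (n + 1)))
      _ = coverCost S w (E (n + 1)) + ∑ i ∈ Finset.range (n + 1 + 1), δ i
          + coverCost S w (E n) := by
          rw [Finset.sum_range_succ _ (n + 1)]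
          ring

theorem coverCost_iUnion_of_monotone (hS : Antitone S)
    (hchain : ∀ x, IsChain (· ≤ ·) {a | x ∈ S a}) {E : ℕ → Set X} (hE : Monotone E) :
    coverCost S w (⋃ n, E n) = ⨆ n, coverCost S w (E n) := by
  refine le_antisymm ?_ (iSup_le fun n => coverCost_mono (subset_iUnion E n))
  set M := ⨆ n, coverCost S w (E n)
  have hle : ∀ n, coverCost S w (E n) ≤ M := le_iSup fun n => coverCost S w (E n)
  refine ENNReal.le_of_forall_pos_le_add fun ε hε hMtop => ?_
  have hfin : ∀ n, coverCost S w (E n) ≠ ⊤ := fun n => ((hle n).trans_lt hMtop).ne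
  obtain ⟨δ, hδ, hδε⟩ := ENNReal.exists_pos_sum_of_countable' (ENNReal.coe_pos.2 hε).ne' ℕ
  choose Λ hcov hcost using fun n =>
    exists_tsum_lt_of_coverCost_lt (ENNReal.lt_add_right (hfin n) (hδ n).ne')
  calc coverCost S w (⋃ n, E n)
      ≤ minimalCost w (⋃ n, accumulate Λ n) := by
        refine coverCost_le_minimalCost hS (iUnion_subset fun n => (hcov n).trans ?_)
        rw [iUnion_accumulate]
        exact biUnion_subset_biUnion_left (subset_iUnion Λ n)
    _ ≤ ⨆ n, minimalCost w (accumulate Λ n) :=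
        minimalCost_iUnion_le w monotone_accumulate.directed_le
    _ ≤ M + ε := iSup_le fun n =>
        (minimalCost_accumulate_le hS hchain hE hfin hcov (fun n => (hcost n).le) n).trans
          (add_le_add (hle n) ((ENNReal.sum_le_tsum _).trans hδε.le))

end Covering

end FamilyCost

section Strings

variable {X : Type*}

lemma stringSet_subset_of_prefix (T : X → X) {u v : List (Set X)} (h : u <+: v) :
    stringSet T v ⊆ stringSet T u := by
  induction u generalizing v with
  | nil => exact subset_univ _
  | cons V u ih =>
    obtain ⟨t, rfl⟩ := h
    exact inter_subset_inter_right V (preimage_mono (ih (List.prefix_append u t)))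

lemma prefix_or_prefix_of_mem_stringSet {T : X → X} {U : Set (Set X)}
    (hU : U.PairwiseDisjoint id) {u v : List (Set X)} (hu : ∀ V ∈ u, V ∈ U)
    (hv : ∀ V ∈ v, V ∈ U) {x : X} (hxu : x ∈ stringSet T u) (hxv : x ∈ stringSet T v) :
    u <+: v ∨ v <+: u := by
  induction u generalizing v x with
  | nil => exact Or.inl List.nil_prefix
  | cons V u ih =>
    cases v with
    | nil => exact Or.inr List.nil_prefix
    | cons W v =>
      rw [List.forall_mem_cons] at hu hv
      obtain rfl : V = W := hU.elim_set hu.1 hv.1 x hxu.1 hxv.1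
      simpa only [List.cons_prefix_cons, true_and] using ih hu.2 hv.2 hxu.2 hxv.2

/-- The strings competing in `M^s_N(𝒰, ·)`: those with letters in `U` and length at least `N`. They
carry the prefix order. -/
@[ext]
structure AdmissibleString (U : Set (Set X)) (N : ℕ) where
  toList : List (Set X)
  letter_mem : ∀ V ∈ toList, V ∈ U
  le_length : N ≤ toList.length

namespace AdmissibleString

variable {U : Set (Set X)} {N : ℕ}

lemma toList_injective : Function.Injective (toList : AdmissibleString U N → List (Set X)) :=
  fun _ _ => AdmissibleString.ext

instance : PartialOrder (AdmissibleString U N) where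
  le u v := u.toList <+: v.toList
  le_refl u := List.prefix_refl u.toList
  le_trans _ _ _ := List.IsPrefix.trans
  le_antisymm _ _ huv hvu := toList_injective (huv.eq_of_length_le hvu.length_le)

lemma length_strictMono : StrictMono fun u : AdmissibleString U N => u.toList.length :=
  fun _ _ huv => huv.le.length_le.lt_of_ne fun h =>
    huv.ne (toList_injective (huv.le.eq_of_length h))

instance : WellFoundedLT (AdmissibleString U N) := length_strictMono.wellFoundedLT

/-- The set `X(u)` of an admissible string. -/
def cylinder (T : X → X) (u : AdmissibleString U N) : Set X := stringSet T u.toList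

/-- The weight `e^{-s·m(u)}` of an admissible string. -/
noncomputable def weight (s : ℝ) (u : AdmissibleString U N) : ℝ≥0∞ :=
  ENNReal.ofReal (Real.exp (-s * u.toList.length))

lemma cylinder_antitone (T : X → X) :
    Antitone (cylinder T : AdmissibleString U N → Set X) :=
  fun _ _ => stringSet_subset_of_prefix T

lemma isChain_setOf_mem_cylinder (hU : U.PairwiseDisjoint id) (T : X → X) (x : X) :
    IsChain (· ≤ ·) {u : AdmissibleString U N | x ∈ cylinder T u} :=
  fun u hu v hv _ => prefix_or_prefix_of_mem_stringSet hU u.letter_mem v.letter_mem hu hv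

lemma biUnion_image_toList (T : X → X) (Λ : Set (AdmissibleString U N)) :
    ⋃ u ∈ toList '' Λ, stringSet T u = ⋃ u ∈ Λ, cylinder T u :=
  biUnion_image

lemma tsum_image_toList (s : ℝ) (Λ : Set (AdmissibleString U N)) :
    ∑' u : toList '' Λ, ENNReal.ofReal (Real.exp (-s * (u : List (Set X)).length)) =
      ∑' u : Λ, weight s (u : AdmissibleString U N) :=
  tsum_image (fun u : List (Set X) => ENNReal.ofReal (Real.exp (-s * u.length)))
    toList_injective.injOn

end AdmissibleString

open AdmissibleString

lemma coverM_eq_coverCost (T : X → X) (U : Finset (Set X)) (s : ℝ) (N : ℕ) (Z : Set X) :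
    coverM T U s N Z =
      coverCost (cylinder T : AdmissibleString (U : Set (Set X)) N → Set X) (weight s) Z := by
  refine le_antisymm (le_iInf₂ fun Λ hZ => ?_) (le_iInf fun Λ => le_iInf₂ fun hΛ hZ => ?_)
  · rw [← biUnion_image_toList] at hZ
    rw [← tsum_image_toList]
    exact iInf_le_of_le _ (iInf₂_le (forall_mem_image.2 fun u _ => ⟨u.letter_mem, u.le_length⟩) hZ)
  · obtain ⟨Λ', rfl⟩ : ∃ Λ' : Set (AdmissibleString (U : Set (Set X)) N), toList '' Λ' = Λ :=
      subset_range_iff_exists_image_eq.1 fun u hu => ⟨⟨u, (hΛ u hu).1, (hΛ u hu).2⟩, rfl⟩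
    rw [biUnion_image_toList] at hZ
    rw [tsum_image_toList]
    exact coverCost_le_tsum hZ

theorem coverM_iUnion_of_monotone_general (T : X → X) (U : Finset (Set X))
    (hUdisj : (U : Set (Set X)).PairwiseDisjoint id) (s : ℝ) (N : ℕ)
    (E : ℕ → Set X) (hE : Monotone E) :
    coverM T U s N (⋃ i, E i) = ⨆ i, coverM T U s N (E i) := by
  simp only [coverM_eq_coverCost]
  exact coverCost_iUnion_of_monotone (cylinder_antitone T) (isChain_setOf_mem_cylinder hUdisj T) hE

end Strings

/-- **Increasing sets lemma** (Feng–Huang, Proposition 3.6(i)): let `(X,T)` be a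
topological dynamical system and `𝒰` a finite partition of `X` into closed-open sets.
If `E₁ ⊆ E₂ ⊆ ⋯` and `E = ⋃_i E_i`, then `M^s_N(𝒰, E) = lim_{i→∞} M^s_N(𝒰, E_i)`
(the sequence being nondecreasing, its limit is its supremum). -/
theorem coverM_iUnion_of_monotone
    {X : Type*} [MetricSpace X] [CompactSpace X]
    (T : X → X) (hT : Continuous T)
    (U : Finset (Set X)) (hUclopen : ∀ V ∈ U, IsClopen V)
    (hUdisj : (U : Set (Set X)).PairwiseDisjoint id)
    (hUcover : ⋃₀ (U : Set (Set X)) = Set.univ)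
    (s : ℝ) (hs : 0 ≤ s) (N : ℕ)
    (E : ℕ → Set X) (hE : Monotone E) :
    coverM T U s N (⋃ i, E i) = ⨆ i, coverM T U s N (E i) :=
  coverM_iUnion_of_monotone_general T U hUdisj s N E hE
end
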